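/- (Corollary 2.6, relaxation part.) Let (A, b) be an explicit s-stage Runge–Kutta method of order p ≥ 2 (in the sense that for every C^∞ right-hand side the one-step local error is O(Δt^{p+1})). Let f be C^∞ with f(t₀, u₀) ≠ 0 and exact solution u defined on a neighborhood of t₀. With γ(Δt) the relaxation parameter defined by the case formula, the relaxed update u¹_γ(Δt) = u₀ + γ(Δt) Δt Σⱼ bⱼ fⱼ, interpreted as an approximation to u(t₀ + γ(Δt)Δt), has order p: ‖u¹_γ(Δt) − u(t₀ + γ(Δt)Δt)‖ = O(Δt^{p+1}) as Δt → 0⁺. -/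

import Mathlib

open scoped RealInnerProductSpace
open Classical

/-- An explicit Runge–Kutta method `(A, b)` has order `p` if for every `C^∞` right-hand
side, every initial condition, and every local solution of the IVP, the one-step local
error is `O(dt^(p+1))`.  Here `F dt i` denotes the stage derivatives
`F dt i = f(t₀ + cᵢ dt, u₀ + dt ∑ⱼ aᵢⱼ F dt j)` with `cᵢ = ∑ⱼ aᵢⱼ`, and the update is
`u¹(dt) = u₀ + dt ∑ⱼ bⱼ F dt j`. -/
def RKHasOrder {s : ℕ} (A : Fin s → Fin s → ℝ) (b : Fin s → ℝ) (p : ℕ) : Prop :=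
  ∀ (m : ℕ) (f : ℝ → EuclideanSpace ℝ (Fin m) → EuclideanSpace ℝ (Fin m)),
    ContDiff ℝ (⊤ : ℕ∞) (Function.uncurry f) →
    ∀ (t₀ : ℝ) (u₀ : EuclideanSpace ℝ (Fin m)) (F : ℝ → Fin s → EuclideanSpace ℝ (Fin m)),
      (∀ dt i, F dt i =
        f (t₀ + (∑ j, A i j) * dt) (u₀ + dt • ∑ j, A i j • F dt j)) →
      ∀ (u : ℝ → EuclideanSpace ℝ (Fin m)) (ε : ℝ), 0 < ε →
        (∀ t ∈ Set.Ioo (t₀ - ε) (t₀ + ε), HasDerivAt u (f t (u t)) t) →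
        u t₀ = u₀ →
        ∃ C δ : ℝ, 0 < C ∧ 0 < δ ∧
          ∀ dt ∈ Set.Ioo (0 : ℝ) δ,
            ‖u₀ + dt • ∑ j, b j • F dt j - u (t₀ + dt)‖ ≤ C * dt ^ (p + 1)

/-- The relaxation parameter of one explicit Runge–Kutta step, as a function of the
step size, given the stage derivatives `F`. -/
noncomputable def RKGamma {s m : ℕ} (A : Fin s → Fin s → ℝ) (b : Fin s → ℝ)
    (F : ℝ → Fin s → EuclideanSpace ℝ (Fin m)) (dt : ℝ) : ℝ :=
  if (∑ j, b j • F dt j) = 0 then 1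
  else (2 * ∑ i, ∑ j, b i * A i j * ⟪F dt i, F dt j⟫) / ‖∑ j, b j • F dt j‖ ^ 2

/-!
Let `S h` be the increment of the step and `h² Q h` the method's own approximation of
`‖u (t₀ + h) - u t₀‖²`, so that `γ = Q / ‖S‖²`.  The function `r t = ‖u t - u t₀‖²` satisfies
`r' = 2 ⟪u - u t₀, f⟫`, and the method applied to the ODE for the pair `(u, r)` returns exactly
`h² Q h` as its second component.  Hence a method of order `p` gives
`h² Q h = ‖u (t₀ + h) - u t₀‖² + O(h^(p+1)) = h² ‖S h‖² + O(h^(p+1))`, and since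
`S h → f t₀ (u t₀)`, which is nonzero, `γ = 1 + O(h^(p-1))`.  Both `S h` and the slope of `u`
between `t₀ + h` and `t₀ + γ h` are `f t₀ (u t₀) + O(h)`, so rescaling the step by `γ` changes
the numerical and the exact solution by amounts that differ by `O(h^(p-1) · h · h)`.
-/

open Asymptotics Filter Topology

section Asymptotics

variable {α 𝕜 E : Type*} [NormedField 𝕜] [SeminormedAddCommGroup E]

lemma isBigO_pow_nhdsGT_zero_iff {g : ℝ → E} {n : ℕ} :
    g =O[𝓝[>] 0] (fun h ↦ h ^ n) ↔
      ∃ C δ : ℝ, 0 < C ∧ 0 < δ ∧ ∀ h ∈ Set.Ioo (0 : ℝ) δ, ‖g h‖ ≤ C * h ^ n := by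
  have norm_pow_of_mem {h δ : ℝ} (hh : h ∈ Set.Ioo 0 δ) : ‖h ^ n‖ = h ^ n :=
    Real.norm_of_nonneg (pow_nonneg hh.1.le n)
  constructor
  · intro hg
    obtain ⟨C, hC, hbound⟩ := hg.exists_pos
    obtain ⟨δ, hδ, hsub⟩ := mem_nhdsGT_iff_exists_Ioo_subset.1 hbound.bound
    exact ⟨C, δ, hC, hδ, fun h hh ↦ (hsub hh).trans_eq (by rw [norm_pow_of_mem hh])⟩
  · rintro ⟨C, δ, -, hδ, hbound⟩
    refine IsBigO.of_bound C (eventually_of_mem (Ioo_mem_nhdsGT hδ) fun h hh ↦ ?_)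
    exact (hbound h hh).trans_eq (by rw [norm_pow_of_mem hh])

lemma isBigO_pow_pow_nhdsWithin_zero {s : Set 𝕜} {m n : ℕ} (hmn : m ≤ n) :
    (fun x : 𝕜 ↦ x ^ n) =O[𝓝[s] 0] fun x ↦ x ^ m := by
  rcases hmn.eq_or_lt with rfl | hlt
  · exact isBigO_refl _ _
  · exact (isLittleO_pow_pow hlt).isBigO.mono nhdsWithin_le_nhds

lemma isBigO_of_smul_isBigO_mul [NormedSpace 𝕜 E] {l : Filter α} {φ ψ : α → 𝕜} {v : α → E}
    (hφ : ∀ᶠ x in l, φ x ≠ 0) (h : (fun x ↦ φ x • v x) =O[l] fun x ↦ φ x * ψ x) :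
    v =O[l] ψ :=
  ((isBigO_refl (fun x ↦ (φ x)⁻¹) l).smul h).congr'
    (hφ.mono fun _ hx ↦ inv_smul_smul₀ hx _) (hφ.mono fun _ hx ↦ inv_mul_cancel_left₀ hx _)

lemma isBigO_norm_sq_sub_norm_sq {l : Filter α} {x y : α → E} {φ : α → ℝ}
    (hx : x =O[l] fun _ ↦ (1 : ℝ)) (hy : y =O[l] fun _ ↦ (1 : ℝ))
    (hxy : (fun a ↦ x a - y a) =O[l] φ) :
    (fun a ↦ ‖x a‖ ^ 2 - ‖y a‖ ^ 2) =O[l] φ := by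
  have hsum : (fun a ↦ ‖x a‖ + ‖y a‖) =O[l] fun _ ↦ (1 : ℝ) := hx.norm_left.add hy.norm_left
  have hdiff : (fun a ↦ ‖x a‖ - ‖y a‖) =O[l] φ :=
    IsBigO.trans (IsBigO.of_bound' (.of_forall fun a ↦ abs_norm_sub_norm_le (x a) (y a))) hxy
  simpa only [sq_sub_sq, one_mul] using hsum.mul hdiff

end Asymptotics

section Relaxation

variable {E : Type*} [NormedAddCommGroup E] [NormedSpace ℝ E] {u u' S : ℝ → E} {t₀ : ℝ}

lemma isBigO_sub_sub_smul_of_hasDerivAt (hu : ∀ᶠ t in 𝓝 t₀, HasDerivAt u (u' t) t)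
    (hu' : (fun t ↦ u' t - u' t₀) =O[𝓝 t₀] fun t ↦ t - t₀) :
    (fun z : ℝ × ℝ ↦ u z.2 - u z.1 - (z.2 - z.1) • u' t₀)
      =O[𝓝 (t₀, t₀)] fun z ↦ ‖z - (t₀, t₀)‖ * (z.2 - z.1) := by
  obtain ⟨K, hK, hbound⟩ := hu'.exists_pos
  obtain ⟨δ, hδ, hball⟩ := Metric.eventually_nhds_iff_ball.1 (hu.and hbound.bound)
  refine IsBigO.of_bound K (eventually_of_mem (Metric.ball_mem_nhds _ hδ) fun z hz ↦ ?_)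
  set r := dist z (t₀, t₀) with hr
  have hsub : Metric.closedBall t₀ r ⊆ Metric.ball t₀ δ := Metric.closedBall_subset_ball hz
  have hderiv : ∀ t ∈ Metric.closedBall t₀ r, HasDerivWithinAt
      (fun t ↦ u t - t • u' t₀) (u' t - (1 : ℝ) • u' t₀) (Metric.closedBall t₀ r) t :=
    fun t ht ↦ ((hball t (hsub ht)).1.sub
      ((hasDerivAt_id t).smul_const (u' t₀))).hasDerivWithinAt
  have hderiv_le : ∀ t ∈ Metric.closedBall t₀ r, ‖u' t - (1 : ℝ) • u' t₀‖ ≤ K * r := by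
    intro t ht
    rw [one_smul]
    exact (hball t (hsub ht)).2.trans (by gcongr; exact ht)
  have hmvt := (convex_closedBall t₀ r).norm_image_sub_le_of_norm_hasDerivWithin_le
    hderiv hderiv_le (x := z.1) (y := z.2) (le_max_left (dist z.1 t₀) (dist z.2 t₀))
    (le_max_right (dist z.1 t₀) (dist z.2 t₀))
  calc ‖u z.2 - u z.1 - (z.2 - z.1) • u' t₀‖
      = ‖u z.2 - z.2 • u' t₀ - (u z.1 - z.1 • u' t₀)‖ := by congr 1; module
    _ ≤ K * r * ‖z.2 - z.1‖ := hmvt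
    _ = K * ‖‖z - (t₀, t₀)‖ * (z.2 - z.1)‖ := by
      rw [norm_mul, norm_norm, hr, dist_eq_norm, mul_assoc]

lemma isBigO_rescaled_sub_sub_smul {γ : ℝ → ℝ} (hu : ∀ᶠ t in 𝓝 t₀, HasDerivAt u (u' t) t)
    (hu' : (fun t ↦ u' t - u' t₀) =O[𝓝 t₀] fun t ↦ t - t₀)
    (hγ : γ =O[𝓝[>] 0] fun _ ↦ (1 : ℝ)) :
    (fun h ↦ u (t₀ + γ h * h) - u (t₀ + h) - ((γ h - 1) * h) • u' t₀)
      =O[𝓝[>] 0] fun h ↦ h * ((γ h - 1) * h) := by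
  have hγh : (fun h ↦ γ h * h) =O[𝓝[>] 0] fun h : ℝ ↦ h := by
    simpa only [one_mul] using hγ.mul (isBigO_refl (fun h : ℝ ↦ h) (𝓝[>] 0))
  have hdist : (fun h ↦ (t₀ + h, t₀ + γ h * h) - (t₀, t₀)) =O[𝓝[>] 0] fun h : ℝ ↦ h := by
    simpa only [Prod.mk_sub_mk, add_sub_cancel_left] using (isBigO_refl _ _).prod_left hγh
  have hlim : Tendsto (fun h ↦ (t₀ + h, t₀ + γ h * h)) (𝓝[>] 0) (𝓝 (t₀, t₀)) :=
    tendsto_sub_nhds_zero_iff.1 (hdist.trans_tendsto (tendsto_id.mono_left nhdsWithin_le_nhds))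
  have hslope := (isBigO_sub_sub_smul_of_hasDerivAt hu hu').comp_tendsto hlim
  have hgap (h : ℝ) : t₀ + γ h * h - (t₀ + h) = (γ h - 1) * h := by ring
  simp only [Function.comp_def, hgap] at hslope
  exact hslope.trans (hdist.norm_left.mul (isBigO_refl _ _))

lemma increment_sub_deriv_isBigO (hu : ∀ᶠ t in 𝓝 t₀, HasDerivAt u (u' t) t)
    (hu' : (fun t ↦ u' t - u' t₀) =O[𝓝 t₀] fun t ↦ t - t₀)
    (hS : (fun h ↦ u t₀ + h • S h - u (t₀ + h)) =O[𝓝[>] 0] fun h ↦ h ^ 2) :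
    (fun h ↦ S h - u' t₀) =O[𝓝[>] 0] fun h ↦ h := by
  -- Rescaling by `γ = 0` moves the second time to `t₀` and yields Taylor's formula.
  have htaylor : (fun h ↦ u t₀ - u (t₀ + h) + h • u' t₀) =O[𝓝[>] 0] fun h ↦ h ^ 2 := by
    simpa [sq] using isBigO_rescaled_sub_sub_smul (γ := fun _ ↦ 0) hu hu' (isBigO_zero _ _)
  refine isBigO_of_smul_isBigO_mul (φ := fun h ↦ h)
    (eventually_mem_nhdsWithin.mono fun _ hh ↦ ne_of_gt hh)
    ((hS.sub htaylor).congr (fun h ↦ ?_) fun h ↦ sq h)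
  module

theorem relaxed_update_isBigO {γ : ℝ → ℝ} {q : ℕ} (hu : ∀ᶠ t in 𝓝 t₀, HasDerivAt u (u' t) t)
    (hu' : (fun t ↦ u' t - u' t₀) =O[𝓝 t₀] fun t ↦ t - t₀)
    (hS : (fun h ↦ u t₀ + h • S h - u (t₀ + h)) =O[𝓝[>] 0] fun h ↦ h ^ (q + 2))
    (hγ : (fun h ↦ γ h - 1) =O[𝓝[>] 0] fun h ↦ h ^ q) :
    (fun h ↦ u t₀ + (γ h * h) • S h - u (t₀ + γ h * h)) =O[𝓝[>] 0] fun h ↦ h ^ (q + 2) := by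
  have hγ_one : γ =O[𝓝[>] 0] fun _ ↦ (1 : ℝ) := by
    have hγ_sub_one : (fun h ↦ γ h - 1) =O[𝓝[>] 0] fun _ ↦ (1 : ℝ) := by
      simpa only [pow_zero] using hγ.trans (isBigO_pow_pow_nhdsWithin_zero q.zero_le)
    simpa only [sub_add_cancel] using hγ_sub_one.add (isBigO_refl _ _)
  have hγ_mul : (fun h ↦ (γ h - 1) * h) =O[𝓝[>] 0] fun h ↦ h ^ q * h :=
    hγ.mul (isBigO_refl _ _)
  have hS_sq : (fun h ↦ u t₀ + h • S h - u (t₀ + h)) =O[𝓝[>] 0] fun h ↦ h ^ 2 :=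
    hS.trans (isBigO_pow_pow_nhdsWithin_zero (Nat.le_add_left 2 q))
  have hincrement :
      (fun h ↦ ((γ h - 1) * h) • (S h - u' t₀)) =O[𝓝[>] 0] fun h ↦ h ^ (q + 2) :=
    (hγ_mul.smul (increment_sub_deriv_isBigO hu hu' hS_sq)).congr_right fun h ↦ by
      rw [smul_eq_mul]; ring
  have hexact : (fun h ↦ u (t₀ + γ h * h) - u (t₀ + h) - ((γ h - 1) * h) • u' t₀)
      =O[𝓝[>] 0] fun h ↦ h ^ (q + 2) :=
    ((isBigO_rescaled_sub_sub_smul hu hu' hγ_one).trans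
      ((isBigO_refl _ _).mul hγ_mul)).congr_right fun h ↦ by ring
  refine ((hS.add hincrement).sub hexact).congr_left fun h ↦ ?_
  module

lemma relaxation_sub_one_isBigO {g : E} {Q : ℝ → ℝ} {q : ℕ} (hu : ContinuousAt u t₀) (hg : g ≠ 0)
    (hSg : Tendsto S (𝓝[>] 0) (𝓝 g))
    (hS : (fun h ↦ u t₀ + h • S h - u (t₀ + h)) =O[𝓝[>] 0] fun h ↦ h ^ (q + 2))
    (hQ : (fun h ↦ h ^ 2 * Q h - ‖u (t₀ + h) - u t₀‖ ^ 2) =O[𝓝[>] 0] fun h ↦ h ^ (q + 2)) :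
    (fun h ↦ Q h / ‖S h‖ ^ 2 - 1) =O[𝓝[>] 0] fun h ↦ h ^ q := by
  have hid : Tendsto (fun h : ℝ ↦ h) (𝓝[>] 0) (𝓝 0) := tendsto_id.mono_left nhdsWithin_le_nhds
  have hexact : Tendsto (fun h ↦ u (t₀ + h) - u t₀) (𝓝[>] 0) (𝓝 (u t₀ - u t₀)) :=
    (hu.tendsto.comp (by simpa using hid.const_add t₀)).sub_const _
  have hsq : (fun h ↦ ‖u (t₀ + h) - u t₀‖ ^ 2 - ‖h • S h‖ ^ 2) =O[𝓝[>] 0] fun h ↦ h ^ (q + 2) :=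
    isBigO_norm_sq_sub_norm_sq (hexact.isBigO_one ℝ) ((hid.smul hSg).isBigO_one ℝ)
      (hS.neg_left.congr_left fun h ↦ by abel)
  have hQS : (fun h ↦ Q h - ‖S h‖ ^ 2) =O[𝓝[>] 0] fun h ↦ h ^ q := by
    refine isBigO_of_smul_isBigO_mul (φ := fun h ↦ h ^ 2)
      (eventually_mem_nhdsWithin.mono fun _ hh ↦ pow_ne_zero 2 (ne_of_gt hh))
      ((hQ.add hsq).congr (fun h ↦ ?_) fun h ↦ by ring)
    rw [sub_add_sub_cancel, norm_smul, mul_pow, Real.norm_eq_abs, sq_abs, smul_eq_mul, mul_sub]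
  have hinv : (fun h ↦ (‖S h‖ ^ 2)⁻¹) =O[𝓝[>] 0] fun _ ↦ (1 : ℝ) :=
    ((hSg.norm.pow 2).inv₀ (pow_ne_zero 2 (norm_ne_zero_iff.2 hg))).isBigO_one ℝ
  refine (hQS.mul hinv).congr' ?_ (.of_forall fun h ↦ mul_one _)
  filter_upwards [hSg.eventually_ne hg] with h hne
  rw [← div_eq_mul_inv, sub_div, div_self (pow_ne_zero 2 (norm_ne_zero_iff.2 hne))]

end Relaxation

section RungeKutta

variable {E : Type*} [NormedAddCommGroup E] {s p : ℕ} {A : Fin s → Fin s → ℝ} {b : Fin s → ℝ}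
  {f : ℝ → E → E} {t₀ : ℝ} {u₀ : E} {F : ℝ → Fin s → E} {u : ℝ → E}

section NormedSpace

variable [NormedSpace ℝ E]

/-- `F h` is a family of stage derivatives, for the step size `h`, of the Runge–Kutta method with
coefficients `A` and abscissae `∑ j, A i j`.  The stage equations are implicit unless `A` is
strictly lower triangular, so `F` is data rather than a function of `A`, `f`, `t₀` and `u₀`. -/
def IsRKStages (A : Fin s → Fin s → ℝ) (f : ℝ → E → E) (t₀ : ℝ) (u₀ : E) (F : ℝ → Fin s → E) :
    Prop :=
  ∀ h i, F h i = f (t₀ + (∑ j, A i j) * h) (u₀ + h • ∑ j, A i j • F h j)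

/-- The increment of a Runge–Kutta step per unit step size: the update is
`u₀ + h • rkIncrement b F h`. -/
def rkIncrement (b : Fin s → ℝ) (F : ℝ → Fin s → E) (h : ℝ) : E :=
  ∑ j, b j • F h j

theorem RKHasOrder.isBigO_error [FiniteDimensional ℝ E] (horder : RKHasOrder A b p)
    (hf : ContDiff ℝ (⊤ : ℕ∞) (Function.uncurry f)) (hF : IsRKStages A f t₀ (u t₀) F)
    (hu : ∀ᶠ t in 𝓝 t₀, HasDerivAt u (f t (u t)) t) :
    (fun h ↦ u t₀ + h • rkIncrement b F h - u (t₀ + h)) =O[𝓝[>] 0] fun h ↦ h ^ (p + 1) := by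
  let e : E ≃L[ℝ] EuclideanSpace ℝ (Fin (Module.finrank ℝ E)) := toEuclidean
  obtain ⟨ε, hε, hball⟩ := Metric.eventually_nhds_iff_ball.1 hu
  rw [Real.ball_eq_Ioo] at hball
  have hcontDiff : ContDiff ℝ (⊤ : ℕ∞) (Function.uncurry fun t x ↦ e (f t (e.symm x))) :=
    e.contDiff.comp (hf.comp (contDiff_fst.prodMk (e.symm.contDiff.comp contDiff_snd)))
  have hstages : IsRKStages A (fun t x ↦ e (f t (e.symm x))) t₀ (e (u t₀)) fun h i ↦ e (F h i) :=
    fun h i ↦ by simp [← hF h i]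
  have hsolution : ∀ t ∈ Set.Ioo (t₀ - ε) (t₀ + ε),
      HasDerivAt (fun t ↦ e (u t)) (e (f t (e.symm (e (u t))))) t := fun t ht ↦ by
    rw [e.symm_apply_apply]
    exact e.hasFDerivAt.comp_hasDerivAt t (hball t ht)
  have herror := isBigO_pow_nhdsGT_zero_iff.2
    (horder _ _ hcontDiff t₀ (e (u t₀)) _ hstages _ ε hε hsolution rfl)
  refine (e.isBigO_comp_rev _ _).trans (herror.congr_left fun h ↦ ?_)
  simp [rkIncrement]

end NormedSpace

section InnerProductSpace

variable [InnerProductSpace ℝ E]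

/-- The approximation of `‖u (t₀ + h) - u t₀‖ ^ 2 / h ^ 2` that a Runge–Kutta method yields by
integrating `2 * ⟪u - u t₀, f⟫` along with `u`. -/
def rkSqNormIncrement (A : Fin s → Fin s → ℝ) (b : Fin s → ℝ) (F : ℝ → Fin s → E) (h : ℝ) : ℝ :=
  2 * ∑ i, ∑ j, b i * A i j * ⟪F h i, F h j⟫

/-- The relaxation parameter of a Runge–Kutta step in an arbitrary inner product space; on
`EuclideanSpace` it is `RKGamma`. -/
noncomputable def rkRelaxation (A : Fin s → Fin s → ℝ) (b : Fin s → ℝ) (F : ℝ → Fin s → E)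
    (h : ℝ) : ℝ :=
  if rkIncrement b F h = 0 then 1 else rkSqNormIncrement A b F h / ‖rkIncrement b F h‖ ^ 2

lemma RKGamma_eq_rkRelaxation {m : ℕ} (A : Fin s → Fin s → ℝ) (b : Fin s → ℝ)
    (F : ℝ → Fin s → EuclideanSpace ℝ (Fin m)) : RKGamma A b F = rkRelaxation A b F := by
  funext h
  simp only [RKGamma, rkRelaxation, rkIncrement, rkSqNormIncrement]
  congr

/-- The right-hand side of the ODE satisfied by the pair `(u, ‖u - u₀‖ ^ 2)` when `u' = f t u`. -/
def normSqAugmentation (f : ℝ → E → E) (u₀ : E) (t : ℝ) (x : E × ℝ) : E × ℝ :=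
  (f t x.1, 2 * ⟪x.1 - u₀, f t x.1⟫)

/-- The stage derivatives for `normSqAugmentation` obtained from stage derivatives `F` for the
original right-hand side. -/
def normSqAugmentedStages (A : Fin s → Fin s → ℝ) (F : ℝ → Fin s → E) (h : ℝ) (i : Fin s) : E × ℝ :=
  (F h i, 2 * ⟪h • ∑ j, A i j • F h j, F h i⟫)

lemma contDiff_normSqAugmentation {n : WithTop ℕ∞} (hf : ContDiff ℝ n (Function.uncurry f))
    (u₀ : E) : ContDiff ℝ n (Function.uncurry (normSqAugmentation f u₀)) := by
  have hstate : ContDiff ℝ n fun q : ℝ × E × ℝ ↦ q.2.1 := contDiff_fst.comp contDiff_snd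
  have hfield : ContDiff ℝ n fun q : ℝ × E × ℝ ↦ f q.1 q.2.1 :=
    hf.comp (contDiff_fst.prodMk hstate)
  exact hfield.prodMk (contDiff_const.mul ((hstate.sub contDiff_const).inner ℝ hfield))

lemma IsRKStages.augment (hF : IsRKStages A f t₀ u₀ F) :
    IsRKStages A (normSqAugmentation f u₀) t₀ (u₀, 0) (normSqAugmentedStages A F) := by
  intro h i
  have hstage : ((u₀, (0 : ℝ)) + h • ∑ j, A i j • normSqAugmentedStages A F h j).1
      = u₀ + h • ∑ j, A i j • F h j := by
    simp [normSqAugmentedStages, Prod.fst_sum]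
  rw [normSqAugmentation, hstage, ← hF h i, add_sub_cancel_left, normSqAugmentedStages]

lemma hasDerivAt_normSqAugmentation {t : ℝ} (hu : HasDerivAt u (f t (u t)) t) (u₀ : E) :
    HasDerivAt (fun t ↦ (u t, ‖u t - u₀‖ ^ 2))
      (normSqAugmentation f u₀ t (u t, ‖u t - u₀‖ ^ 2)) t :=
  hu.prodMk (hu.sub_const u₀).norm_sq

lemma rkIncrement_normSqAugmentedStages (A : Fin s → Fin s → ℝ) (b : Fin s → ℝ)
    (F : ℝ → Fin s → E) (h : ℝ) :
    rkIncrement b (normSqAugmentedStages A F) h =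
      (rkIncrement b F h, h * rkSqNormIncrement A b F h) := by
  ext
  · simp [rkIncrement, normSqAugmentedStages, Prod.fst_sum]
  · simp only [rkIncrement, normSqAugmentedStages, rkSqNormIncrement, Prod.snd_sum, Prod.smul_snd,
      smul_eq_mul, real_inner_smul_left, sum_inner, Finset.mul_sum]
    refine Finset.sum_congr rfl fun i _ ↦ Finset.sum_congr rfl fun j _ ↦ ?_
    rw [real_inner_comm]
    ring

theorem RKHasOrder.isBigO_sqNorm_error [FiniteDimensional ℝ E] (horder : RKHasOrder A b p)
    (hf : ContDiff ℝ (⊤ : ℕ∞) (Function.uncurry f)) (hF : IsRKStages A f t₀ (u t₀) F)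
    (hu : ∀ᶠ t in 𝓝 t₀, HasDerivAt u (f t (u t)) t) :
    (fun h ↦ h ^ 2 * rkSqNormIncrement A b F h - ‖u (t₀ + h) - u t₀‖ ^ 2)
      =O[𝓝[>] 0] fun h ↦ h ^ (p + 1) := by
  have hstages : IsRKStages A (normSqAugmentation f (u t₀)) t₀ (u t₀, ‖u t₀ - u t₀‖ ^ 2)
      (normSqAugmentedStages A F) := by
    simpa using hF.augment
  have haugmented := horder.isBigO_error (u := fun t ↦ (u t, ‖u t - u t₀‖ ^ 2))
    (contDiff_normSqAugmentation hf (u t₀)) hstages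
    (hu.mono fun t ht ↦ hasDerivAt_normSqAugmentation ht (u t₀))
  refine (isBigO_snd_prod'.trans haugmented).congr_left fun h ↦ ?_
  simp [rkIncrement_normSqAugmentedStages, sq, mul_assoc]

theorem rrk_relaxation_order_cor_general [FiniteDimensional ℝ E] (hp : 1 ≤ p)
    (horder : RKHasOrder A b p) (hf : ContDiff ℝ (⊤ : ℕ∞) (Function.uncurry f))
    (hf0 : f t₀ (u t₀) ≠ 0) (hF : IsRKStages A f t₀ (u t₀) F)
    (hu : ∀ᶠ t in 𝓝 t₀, HasDerivAt u (f t (u t)) t) :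
    (fun h ↦ u t₀ + (rkRelaxation A b F h * h) • rkIncrement b F h
        - u (t₀ + rkRelaxation A b F h * h)) =O[𝓝[>] 0] fun h ↦ h ^ (p + 1) := by
  obtain ⟨q, rfl⟩ := Nat.exists_eq_add_of_le' hp
  have hderiv : HasDerivAt u (f t₀ (u t₀)) t₀ := hu.self_of_nhds
  have hslope : (fun t ↦ f t (u t) - f t₀ (u t₀)) =O[𝓝 t₀] fun t ↦ t - t₀ :=
    (((hf.differentiable (by simp)) (t₀, u t₀)).comp t₀
      (differentiableAt_id.prodMk hderiv.differentiableAt)).isBigO_sub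
  have herror := horder.isBigO_error hf hF hu
  have herror_sq := herror.trans (isBigO_pow_pow_nhdsWithin_zero (Nat.le_add_left 2 q))
  have hincrement : Tendsto (rkIncrement b F) (𝓝[>] 0) (𝓝 (f t₀ (u t₀))) :=
    tendsto_sub_nhds_zero_iff.1 ((increment_sub_deriv_isBigO hu hslope herror_sq).trans_tendsto
      (tendsto_id.mono_left nhdsWithin_le_nhds))
  have hγ : (fun h ↦ rkRelaxation A b F h - 1) =O[𝓝[>] 0] fun h ↦ h ^ q := by
    refine (relaxation_sub_one_isBigO hderiv.continuousAt hf0 hincrement herror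
      (horder.isBigO_sqNorm_error hf hF hu)).congr' ?_ .rfl
    filter_upwards [hincrement.eventually_ne hf0] with h hne
    rw [rkRelaxation, if_neg hne]
  exact relaxed_update_isBigO hu hslope herror hγ

end InnerProductSpace

end RungeKutta

/-- Corollary 2.6, relaxation part.  Let `(A, b)` be an explicit `s`-stage
Runge–Kutta method of order `p ≥ 2`, let `f` be `C^∞` with `f(t₀, u₀) ≠ 0` and exact
solution `u` defined on a neighborhood of `t₀`.  With `γ(dt)` the relaxation parameter
defined by the case formula, the relaxed update
`u¹_γ(dt) = u₀ + γ(dt) dt ∑ⱼ bⱼ fⱼ`, interpreted as an approximation to `u(t₀ + γ(dt) dt)`,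
has order `p`: `‖u¹_γ(dt) − u(t₀ + γ(dt) dt)‖ = O(dt^(p+1))` as `dt → 0⁺`. -/
theorem rrk_relaxation_order_cor
    {s m p : ℕ} (A : Fin s → Fin s → ℝ) (b : Fin s → ℝ)
    (hA : ∀ i j : Fin s, (i : ℕ) ≤ (j : ℕ) → A i j = 0)
    (hp : 2 ≤ p)
    (horder : RKHasOrder A b p)
    (f : ℝ → EuclideanSpace ℝ (Fin m) → EuclideanSpace ℝ (Fin m))
    (hf : ContDiff ℝ (⊤ : ℕ∞) (Function.uncurry f))
    (t₀ : ℝ) (u₀ : EuclideanSpace ℝ (Fin m))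
    (hf0 : f t₀ u₀ ≠ 0)
    (F : ℝ → Fin s → EuclideanSpace ℝ (Fin m))
    (hF : ∀ dt i, F dt i =
      f (t₀ + (∑ j, A i j) * dt) (u₀ + dt • ∑ j, A i j • F dt j))
    (u : ℝ → EuclideanSpace ℝ (Fin m)) (ε : ℝ) (hε : 0 < ε)
    (hu : ∀ t ∈ Set.Ioo (t₀ - ε) (t₀ + ε), HasDerivAt u (f t (u t)) t)
    (hu₀ : u t₀ = u₀) :
    ∃ C δ : ℝ, 0 < C ∧ 0 < δ ∧
      ∀ dt ∈ Set.Ioo (0 : ℝ) δ,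
        ‖u₀ + (RKGamma A b F dt * dt) • ∑ j, b j • F dt j - u (t₀ + RKGamma A b F dt * dt)‖
          ≤ C * dt ^ (p + 1) := by
  subst hu₀
  have hu_near : ∀ᶠ t in 𝓝 t₀, HasDerivAt u (f t (u t)) t :=
    eventually_of_mem (Ioo_mem_nhds (by linarith) (by linarith)) hu
  rw [RKGamma_eq_rkRelaxation]
  exact isBigO_pow_nhdsGT_zero_iff.1
    (rrk_relaxation_order_cor_general (by omega) horder hf hf0 hF hu_near)
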